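/- arXiv:2401.12510 — 14 statements merged into one kernel-verified Lean document; each statement's English description precedes it below -/
import Mathlib

section
/- Let R be a centrally essential ring and let J be a right ideal of R which is semiprime as a ring. Then J is reduced, i.e., J contains no nonzero nilpotent element; in particular, there is no nonzero a ∈ J with a² = 0. -/
/-- A unital ring `R` is centrally essential if for every nonzero `a ∈ R` there exists a
central element `c` such that `a * c` is a nonzero central element. -/
def IsCentrallyEssential (R : Type*) [Ring R] : Prop :=
  ∀ a : R, a ≠ 0 → ∃ c ∈ Set.center R, a * c ∈ Set.center R ∧ a * c ≠ 0

/-- In a centrally essential ring, a right ideal that is semiprime as a ring has no nonzero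
element of square zero: such an element would have a nonzero central multiple `z` of square zero,
and `z * R` would be a nonzero ideal of square zero. -/
theorem IsCentrallyEssential.eq_zero_of_mul_self_eq_zero {R : Type*} [Ring R]
    (hR : IsCentrallyEssential R) {J : AddSubgroup R} (hJright : ∀ x ∈ J, ∀ r : R, x * r ∈ J)
    (hJsemiprime : ∀ N : AddSubgroup R, (N : Set R) ⊆ (J : Set R) →
      (∀ x ∈ J, ∀ n ∈ N, x * n ∈ N) → (∀ x ∈ J, ∀ n ∈ N, n * x ∈ N) →
      (∀ m ∈ N, ∀ n ∈ N, m * n = 0) → N = ⊥)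
    {a : R} (ha : a ∈ J) (haa : a * a = 0) : a = 0 := by
  by_contra hne
  obtain ⟨c, hc, hz, hz0⟩ := hR a hne
  have hzJ : a * c ∈ J := hJright a ha c
  have hzz : a * c * (a * c) = 0 := by
    rw [← mul_assoc, mul_assoc a c a, (Set.mem_center_iff.mp hc).comm a, ← mul_assoc, haa,
      zero_mul, zero_mul]
  have hzcomm (x : R) : a * c * x = x * (a * c) := (Set.mem_center_iff.mp hz).comm x
  generalize a * c = z at hzJ hzz hzcomm hz0
  have hbot : (AddMonoidHom.mulLeft z).range = ⊥ := by
    refine hJsemiprime _ ?_ ?_ ?_ ?_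
    · rintro _ ⟨r, rfl⟩
      exact hJright z hzJ r
    · rintro x - _ ⟨r, rfl⟩
      exact ⟨x * r, by simp only [AddMonoidHom.coe_mulLeft, ← mul_assoc, hzcomm x]⟩
    · rintro x - _ ⟨r, rfl⟩
      exact ⟨r * x, by simp only [AddMonoidHom.coe_mulLeft, mul_assoc]⟩
    · rintro _ ⟨r, rfl⟩ _ ⟨s, rfl⟩
      simp only [AddMonoidHom.coe_mulLeft]
      rw [hzcomm r, mul_assoc, ← mul_assoc z z s, hzz, zero_mul, mul_zero]
  have hmem : z ∈ (AddMonoidHom.mulLeft z).range := ⟨1, by simp⟩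
  rw [hbot] at hmem
  exact hz0 (AddSubgroup.mem_bot.mp hmem)

/-- Let `R` be a centrally essential ring and let `J` be a right ideal of `R` which is
semiprime as a ring. Then `J` is reduced (contains no nonzero nilpotent element); in
particular there is no nonzero `a ∈ J` with `a ^ 2 = 0`. -/
theorem stmt0 (R : Type*) [Ring R] (hR : IsCentrallyEssential R)
    (J : AddSubgroup R) (hJright : ∀ x ∈ J, ∀ r : R, x * r ∈ J)
    (hJsemiprime : ∀ N : AddSubgroup R, (N : Set R) ⊆ (J : Set R) →
      (∀ x ∈ J, ∀ n ∈ N, x * n ∈ N) → (∀ x ∈ J, ∀ n ∈ N, n * x ∈ N) →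
      (∀ m ∈ N, ∀ n ∈ N, m * n = 0) → N = ⊥) :
    (∀ a ∈ J, IsNilpotent a → a = 0) ∧ (∀ a ∈ J, a * a = 0 → a = 0) := by
  have hsq : ∀ a ∈ J, a * a = 0 → a = 0 := fun a ha haa =>
    hR.eq_zero_of_mul_self_eq_zero hJright hJsemiprime ha haa
  refine ⟨?_, hsq⟩
  rintro a ha ⟨n, hn⟩
  have hpow (k : ℕ) (hk : a ^ (k + 1) = 0) : a = 0 := by
    induction k with
    | zero => simpa using hk
    | succ k ih =>
      refine ih (hsq _ (pow_succ' a k ▸ hJright a ha _) ?_)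
      rw [← pow_add]
      exact pow_eq_zero_of_le (by lia) hk
  exact hpow n (pow_eq_zero_of_le n.le_succ hn)
end

section
/- Let R be a centrally essential ring and let I be a two-sided ideal of R which is semiprime as a ring. Then I is contained in the center C(R) of R; in particular, I is a commutative (hence centrally essential) ring. -/
/-- A central element of square zero in an ideal that is semiprime as a ring vanishes. -/
theorem eq_zero_of_mem_center_of_mul_self_eq_zero {R : Type*} [Ring R]
    (I : AddSubgroup R) (hItwoSided : ∀ x ∈ I, ∀ r : R, x * r ∈ I ∧ r * x ∈ I)
    (hIsemiprime : ∀ N : AddSubgroup R, (N : Set R) ⊆ (I : Set R) →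
      (∀ x ∈ I, ∀ n ∈ N, x * n ∈ N) → (∀ x ∈ I, ∀ n ∈ N, n * x ∈ N) →
      (∀ m ∈ N, ∀ n ∈ N, m * n = 0) → N = ⊥)
    {z : R} (hzI : z ∈ I) (hz : z ∈ Set.center R) (hzz : z * z = 0) : z = 0 := by
  have hcomm : ∀ r, z * r = r * z := fun r => (Set.mem_center_iff.mp hz).comm r
  have hbot : (AddMonoidHom.mulLeft z).range = ⊥ := by
    apply hIsemiprime
    · rintro _ ⟨r, rfl⟩
      exact (hItwoSided z hzI r).1
    · rintro x - _ ⟨r, rfl⟩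
      exact ⟨x * r, by simp only [AddMonoidHom.coe_mulLeft]; rw [← mul_assoc, hcomm x, mul_assoc]⟩
    · rintro x - _ ⟨r, rfl⟩
      exact ⟨r * x, by simp only [AddMonoidHom.coe_mulLeft]; rw [mul_assoc]⟩
    · rintro _ ⟨r, rfl⟩ _ ⟨s, rfl⟩
      simp only [AddMonoidHom.coe_mulLeft]
      rw [hcomm r, mul_assoc, ← mul_assoc z z s, hzz, zero_mul, mul_zero]
  have hmem : z ∈ (AddMonoidHom.mulLeft z).range := ⟨1, by simp⟩
  rwa [hbot, AddSubgroup.mem_bot] at hmem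

/-- Let `R` be a centrally essential ring and let `I` be a two-sided ideal of `R` which is
semiprime as a ring. Then `I ⊆ C(R)`; in particular, `I` is a commutative ring. -/
theorem stmt1 (R : Type*) [Ring R] (hR : IsCentrallyEssential R)
    (I : AddSubgroup R) (hItwoSided : ∀ x ∈ I, ∀ r : R, x * r ∈ I ∧ r * x ∈ I)
    (hIsemiprime : ∀ N : AddSubgroup R, (N : Set R) ⊆ (I : Set R) →
      (∀ x ∈ I, ∀ n ∈ N, x * n ∈ N) → (∀ x ∈ I, ∀ n ∈ N, n * x ∈ N) →
      (∀ m ∈ N, ∀ n ∈ N, m * n = 0) → N = ⊥) :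
    (I : Set R) ⊆ Set.center R ∧ (∀ x ∈ I, ∀ y ∈ I, x * y = y * x) := by
  have hsub : (I : Set R) ⊆ Set.center R := by
    intro a ha
    rw [Semigroup.mem_center_iff]
    intro r
    by_contra hne
    obtain ⟨e, -, hz, hz0⟩ := hR (r * a - a * r) (sub_ne_zero.mpr hne)
    have hzI : (r * a - a * r) * e ∈ I :=
      (hItwoSided _ (I.sub_mem (hItwoSided a ha r).2 (hItwoSided a ha r).1) e).1
    -- The commutator is annihilated by every central `c` such that `a * c` is central.
    have hann : ∀ c ∈ Set.center R, a * c ∈ Set.center R → (r * a - a * r) * e * c = 0 := by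
      intro c hc hac
      have hcc := Semigroup.mem_center_iff.mp hc
      have hacc := Semigroup.mem_center_iff.mp hac
      have hd : (r * a - a * r) * c = 0 := by
        rw [sub_mul, mul_assoc, hacc r, mul_assoc a r c, hcc r, mul_assoc, sub_self]
      rw [mul_assoc, hcc e, ← mul_assoc, hd, zero_mul]
    generalize (r * a - a * r) * e = z at hz hz0 hzI hann
    have hred : ∀ w ∈ I, w ∈ Set.center R → w * w = 0 → w = 0 := fun w hwI hw hww =>
      eq_zero_of_mem_center_of_mul_self_eq_zero I hItwoSided hIsemiprime hwI hw hww
    by_cases haz : a * z = 0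
    · exact hz0 (hred z hzI hz (hann z hz (haz ▸ Set.zero_mem_center)))
    · obtain ⟨c, hc, hazc, hazc0⟩ := hR (a * z) haz
      rw [mul_assoc] at hazc hazc0
      have hzc : z * c ∈ Set.center R := Set.mul_mem_center hz hc
      have hzzc := hann (z * c) hzc hazc
      have hzc0 : z * c = 0 := by
        refine hred _ (hItwoSided z hzI c).1 hzc ?_
        rw [← mul_assoc, ← Semigroup.mem_center_iff.mp hzc z, hzzc, zero_mul]
      exact hazc0 (by rw [hzc0, mul_zero])
  exact ⟨hsub, fun x hx y _ => (Semigroup.mem_center_iff.mp (hsub hx) y).symm⟩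
end

section
/- Every minimal non-nilpotent right ideal J of a centrally essential ring R is a two-sided ideal of R and is contained in the center C(R) of R. -/
/-- Every minimal non-nilpotent right ideal `J` of a centrally essential ring `R` is a
two-sided ideal of `R` and is contained in the center `C(R)` of `R`. -/
theorem stmt2 (R : Type*) [Ring R] (hR : IsCentrallyEssential R)
    (J : AddSubgroup R) (hJright : ∀ x ∈ J, ∀ r : R, x * r ∈ J)
    (hJne : J ≠ ⊥)
    (hJmin : ∀ J' : AddSubgroup R, (∀ x ∈ J', ∀ r : R, x * r ∈ J') → J' ≤ J →
      J' = ⊥ ∨ J' = J)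
    (hJnonnilpotent : ∀ n : ℕ, 0 < n →
      ∃ f : Fin n → R, (∀ i, f i ∈ J) ∧ (List.ofFn f).prod ≠ 0) :
    (∀ x ∈ J, ∀ r : R, r * x ∈ J) ∧ (J : Set R) ⊆ Set.center R := by
  have generates : ∀ a ∈ J, a ≠ 0 → ∀ x ∈ J, ∃ s, x = a * s := by
    intro a ha ha0 x hx
    have hle : (AddMonoidHom.mulLeft a).range ≤ J := by
      rintro _ ⟨s, rfl⟩
      exact hJright a ha s
    have hmem : a ∈ (AddMonoidHom.mulLeft a).range := ⟨1, mul_one a⟩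
    rcases hJmin (AddMonoidHom.mulLeft a).range
        (by rintro _ ⟨s, rfl⟩ r; exact ⟨s * r, (mul_assoc a s r).symm⟩) hle with h | h
    · rw [h] at hmem
      exact absurd (AddSubgroup.mem_bot.mp hmem) ha0
    · rw [← h] at hx
      obtain ⟨s, rfl⟩ := hx
      exact ⟨s, rfl⟩
  obtain ⟨b, hb, hb0⟩ := J.bot_or_exists_ne_zero.resolve_left hJne
  obtain ⟨c, -, hz, hz0⟩ := hR b hb0
  have left_mem : ∀ x ∈ J, ∀ r : R, r * x ∈ J := by
    intro x hx r
    obtain ⟨s, rfl⟩ := generates _ (hJright _ hb c) hz0 x hx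
    rw [← mul_assoc, Semigroup.mem_center_iff.mp hz r, mul_assoc]
    exact hJright _ (hJright _ hb c) _
  refine ⟨left_mem, fun a ha => Semigroup.mem_center_iff.mpr fun r => ?_⟩
  by_contra hne
  have hd : r * a - a * r ∈ J := J.sub_mem (left_mem a ha r) (hJright a ha r)
  obtain ⟨c', hc', hac, hac0⟩ := hR a fun h => hne (by simp [h])
  have hdc : (r * a - a * r) * c' = 0 := by
    rw [sub_mul, mul_assoc, Semigroup.mem_center_iff.mp hac r, mul_assoc, mul_assoc,
      Semigroup.mem_center_iff.mp hc' r, sub_self]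
  obtain ⟨s, hs⟩ := generates _ hd (sub_ne_zero.mpr hne) a ha
  apply hac0
  rw [hs, mul_assoc, Semigroup.mem_center_iff.mp hc' s, ← mul_assoc, hdc, zero_mul]
end

section
/- Let R be a centrally essential ring and let J be a right ideal of R which is semiprime as a ring. If the right annihilator Ann_R(J) = {t ∈ R : J*t = 0} is zero, then J is contained in the center C(R) of R. -/
/-- A centrally essential ring whose center has no nonzero square-zero element is commutative. -/
theorem IsCentrallyEssential.mul_comm_of_center_reduced {R : Type*} [Ring R]
    (hR : IsCentrallyEssential R) (hred : ∀ z ∈ Set.center R, z * z = 0 → z = 0) (a b : R) :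
    a * b = b * a := by
  by_contra hab
  have kill : ∀ c ∈ Set.center R, a * c ∈ Set.center R → (a * b - b * a) * c = 0 := by
    intro c hc hac
    rw [Semigroup.mem_center_iff] at hc hac
    rw [sub_mul, mul_assoc, hc b, ← mul_assoc, ← hac b, mul_assoc, sub_self]
  obtain ⟨e, he, hz, hz0⟩ := hR _ (sub_ne_zero.mpr hab)
  set z := (a * b - b * a) * e with hzdef
  have kill_z : ∀ c ∈ Set.center R, a * c ∈ Set.center R → z * c = 0 := by
    intro c hc hac
    rw [hzdef, mul_assoc, ← Semigroup.mem_center_iff.mp he c, ← mul_assoc, kill c hc hac, zero_mul]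
  by_cases haz : a * z = 0
  · exact hz0 (hred z hz (kill_z z hz (haz ▸ Set.zero_mem_center)))
  · obtain ⟨f, hf, hazf, hazf0⟩ := hR _ haz
    rw [mul_assoc] at hazf hazf0
    have hzf : z * f ∈ Set.center R := Set.mul_mem_center hz hf
    have hsq : z * f * (z * f) = 0 := by
      rw [mul_assoc, Semigroup.mem_center_iff.mp hzf f, ← mul_assoc, kill_z _ hzf hazf, zero_mul]
    exact hazf0 (by rw [hred _ hzf hsq, mul_zero])

/-- Let `R` be a centrally essential ring and let `J` be a right ideal of `R` which is
semiprime as a ring. If the right annihilator `Ann_R(J) = {t : J * t = 0}` is zero,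
then `J` is contained in the center of `R`. -/
theorem stmt4 (R : Type*) [Ring R] (hR : IsCentrallyEssential R)
    (J : AddSubgroup R) (hJright : ∀ x ∈ J, ∀ r : R, x * r ∈ J)
    (hJsemiprime : ∀ N : AddSubgroup R, (N : Set R) ⊆ (J : Set R) →
      (∀ x ∈ J, ∀ n ∈ N, x * n ∈ N) → (∀ x ∈ J, ∀ n ∈ N, n * x ∈ N) →
      (∀ m ∈ N, ∀ n ∈ N, m * n = 0) → N = ⊥)
    (hAnn : ∀ t : R, (∀ x ∈ J, x * t = 0) → t = 0) :
    (J : Set R) ⊆ Set.center R := by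
  have hred : ∀ z ∈ Set.center R, z * z = 0 → z = 0 := by
    intro z hz hzz
    have comm := Semigroup.mem_center_iff.mp hz
    refine hAnn z fun x hx => ?_
    have hbot := hJsemiprime (J.map (AddMonoidHom.mulRight z)) ?_ ?_ ?_ ?_
    · have hmem : x * z ∈ J.map (AddMonoidHom.mulRight z) := ⟨x, hx, rfl⟩
      rwa [hbot, AddSubgroup.mem_bot] at hmem
    · rintro _ ⟨y, hy, rfl⟩
      exact hJright y hy z
    · rintro u hu _ ⟨y, hy, rfl⟩
      exact ⟨u * y, hJright u hu y, mul_assoc u y z⟩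
    · rintro u hu _ ⟨y, hy, rfl⟩
      refine ⟨y * u, hJright y hy u, ?_⟩
      change y * u * z = y * z * u
      rw [mul_assoc, comm, mul_assoc]
    · rintro _ ⟨u, hu, rfl⟩ _ ⟨y, hy, rfl⟩
      change u * z * (y * z) = 0
      rw [comm y, mul_assoc, ← mul_assoc z z y, hzz, zero_mul, mul_zero]
  intro x _
  exact Semigroup.mem_center_iff.mpr fun g => hR.mul_comm_of_center_reduced hred g x
end

section
/- Let R be a centrally essential unital ring and let I be a minimal non-nilpotent right ideal of R. Then I = eR for a central idempotent e of R (so I is a two-sided ideal), and both the ring I (with operations inherited from R) and the quotient ring R/I are centrally essential rings. -/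
/-- A subset `S` of a ring, regarded as a (not necessarily unital) ring with the inherited
operations, is centrally essential if it is commutative or for every element of `S` that is
not central in `S` there exist nonzero elements `x, y` of the center of `S` with `a * x = y`. -/
def SetIsCentrallyEssential (R : Type*) [Ring R] (S : Set R) : Prop :=
  (∀ x ∈ S, ∀ y ∈ S, x * y = y * x) ∨
    ∀ a ∈ S, (¬ ∀ x ∈ S, a * x = x * a) →
      ∃ x ∈ S, ∃ y ∈ S, (∀ z ∈ S, x * z = z * x) ∧ (∀ z ∈ S, y * z = z * y) ∧
        x ≠ 0 ∧ y ≠ 0 ∧ a * x = y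

/-- Every idempotent of a centrally essential ring is central. -/
theorem IsCentrallyEssential.idempotent_mem_center {R : Type*} [Ring R]
    (hR : IsCentrallyEssential R) {e : R} (he : e * e = e) : e ∈ Set.center R := by
  rw [Semigroup.mem_center_iff]
  intro x
  have h_right : e * x - e * x * e = 0 := by
    by_contra h
    obtain ⟨c, hc, hac, hne⟩ := hR _ h
    rw [Semigroup.mem_center_iff] at hc hac
    apply hne
    calc (e * x - e * x * e) * c = e * ((e * x - e * x * e) * c) := by
          simp only [mul_sub, sub_mul, ← mul_assoc, he]
      _ = (e * x - e * x * e) * c * e := hac e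
      _ = (e * x - e * x * e) * e * c := by rw [mul_assoc, ← hc e, ← mul_assoc]
      _ = 0 := by simp only [sub_mul, mul_assoc, he, sub_self, zero_mul]
  have h_left : x * e - e * x * e = 0 := by
    by_contra h
    obtain ⟨c, hc, hac, hne⟩ := hR _ h
    rw [Semigroup.mem_center_iff] at hc hac
    apply hne
    calc (x * e - e * x * e) * c = (x * e - e * x * e) * e * c := by
          simp only [sub_mul, mul_assoc, he]
      _ = (x * e - e * x * e) * c * e := by rw [mul_assoc, hc e, ← mul_assoc]
      _ = e * ((x * e - e * x * e) * c) := (hac e).symm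
      _ = 0 := by simp only [mul_sub, sub_mul, ← mul_assoc, he, sub_self]
  exact (sub_eq_zero.mp h_left).trans (sub_eq_zero.mp h_right).symm

/-- A minimal right ideal `I` with `a * b ≠ 0` for some `a b ∈ I` contains an idempotent acting
as a left identity on `I`. -/
theorem exists_idempotent_of_minimal_right_ideal {R : Type*} [Ring R]
    (I : AddSubgroup R) (hIright : ∀ x ∈ I, ∀ r : R, x * r ∈ I)
    (hImin : ∀ I' : AddSubgroup R, (∀ x ∈ I', ∀ r : R, x * r ∈ I') → I' ≤ I →
      I' = ⊥ ∨ I' = I)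
    {a b : R} (ha : a ∈ I) (hb : b ∈ I) (hab : a * b ≠ 0) :
    ∃ e ∈ I, e * e = e ∧ ∀ x ∈ I, e * x = x := by
  have h_image : I.map (AddMonoidHom.mulLeft a) = I := by
    refine (hImin _ ?_ ?_).resolve_left fun h => hab ?_
    · rintro _ ⟨y, hy, rfl⟩ r
      exact ⟨y * r, hIright y hy r, by simp [mul_assoc]⟩
    · rintro _ ⟨y, -, rfl⟩
      exact hIright a ha y
    · have : a * b ∈ I.map (AddMonoidHom.mulLeft a) := ⟨b, hb, rfl⟩
      rwa [h, AddSubgroup.mem_bot] at this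
  have h_ker : I ⊓ (AddMonoidHom.mulLeft a).ker = ⊥ := by
    refine (hImin _ ?_ inf_le_left).resolve_right fun h => hab ?_
    · rintro y ⟨hy, hay⟩ r
      have hay' : a * y = 0 := hay
      refine ⟨hIright y hy r, ?_⟩
      change a * (y * r) = 0
      rw [← mul_assoc, hay', zero_mul]
    · rw [← h] at hb
      exact hb.2
  have h_cancel : ∀ x ∈ I, a * x = 0 → x = 0 := fun x hx hax => by
    have : x ∈ I ⊓ (AddMonoidHom.mulLeft a).ker := ⟨hx, hax⟩
    rwa [h_ker, AddSubgroup.mem_bot] at this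
  obtain ⟨e, he, hae⟩ : a ∈ I.map (AddMonoidHom.mulLeft a) := h_image.symm ▸ ha
  replace hae : a * e = a := hae
  have h_id : ∀ x ∈ I, e * x = x := fun x hx =>
    sub_eq_zero.mp <| h_cancel _ (I.sub_mem (hIright e he x) hx) <| by
      rw [mul_sub, ← mul_assoc, hae, sub_self]
  exact ⟨e, he, h_id e he, h_id⟩

/-- Let `R` be a centrally essential unital ring and let `I` be a minimal non-nilpotent right
ideal of `R`. Then `I = eR` for a central idempotent `e` (so `I` is a two-sided ideal), and
both the ring `I` and the quotient ring `R/I` are centrally essential rings.  Central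
essentiality of the quotient ring `R/I` is expressed via representatives. -/
theorem stmt5 (R : Type*) [Ring R] (hR : IsCentrallyEssential R)
    (I : AddSubgroup R) (hIright : ∀ x ∈ I, ∀ r : R, x * r ∈ I)
    (hIne : I ≠ ⊥)
    (hImin : ∀ I' : AddSubgroup R, (∀ x ∈ I', ∀ r : R, x * r ∈ I') → I' ≤ I →
      I' = ⊥ ∨ I' = I)
    (hInonnilpotent : ∀ n : ℕ, 0 < n →
      ∃ f : Fin n → R, (∀ i, f i ∈ I) ∧ (List.ofFn f).prod ≠ 0) :
    (∃ e : R, e ∈ Set.center R ∧ e * e = e ∧ (I : Set R) = Set.range (fun r : R => e * r)) ∧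
    (∀ x ∈ I, ∀ r : R, r * x ∈ I) ∧
    SetIsCentrallyEssential R (I : Set R) ∧
    (∀ a : R, a ∉ I → ∃ c : R, (∀ x : R, c * x - x * c ∈ I) ∧
      (∀ x : R, a * c * x - x * (a * c) ∈ I) ∧ a * c ∉ I) := by
  obtain ⟨f, hf, hprod⟩ := hInonnilpotent 2 two_pos
  have hab : f 0 * f 1 ≠ 0 := by simpa [List.ofFn_succ] using hprod
  obtain ⟨e, heI, hee, h_id⟩ :=
    exists_idempotent_of_minimal_right_ideal I hIright hImin (hf 0) (hf 1) hab
  have he_center := hR.idempotent_mem_center hee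
  have he_comm := Semigroup.mem_center_iff.mp he_center
  refine ⟨⟨e, he_center, hee, ?_⟩, ?_, Or.inr ?_, ?_⟩
  · ext x
    constructor
    · exact fun hx => ⟨x, h_id x hx⟩
    · rintro ⟨r, rfl⟩
      exact hIright e heI r
  · intro x hx r
    rw [← h_id x hx, ← mul_assoc, he_comm r, mul_assoc]
    exact hIright e heI _
  · intro a ha hnc
    have ha0 : a ≠ 0 := by
      rintro rfl
      simp at hnc
    obtain ⟨c, hc, hac, hne⟩ := hR a ha0
    have heq : a * (e * c) = a * c := by rw [← mul_assoc, he_comm a, h_id a ha]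
    have hec := Semigroup.mem_center_iff.mp (Set.mul_mem_center he_center hc)
    rw [Semigroup.mem_center_iff] at hac
    refine ⟨e * c, hIright e heI c, a * c, hIright a ha c, fun z _ => (hec z).symm,
      fun z _ => (hac z).symm, fun h => hne ?_, hne, heq⟩
    rw [← heq, h, mul_zero]
  · intro a ha
    have ha0 : a * (1 - e) ≠ 0 := fun h => ha <| by
      rw [mul_sub, mul_one, sub_eq_zero, he_comm a] at h
      rw [h]
      exact hIright e heI a
    obtain ⟨c, hc, hac, hne⟩ := hR _ ha0
    have h_compl : (1 - e) * (1 - e) = 1 - e := IsIdempotentElem.one_sub hee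
    have hdc := Semigroup.mem_center_iff.mp
      (Set.mul_mem_center (hR.idempotent_mem_center h_compl) hc)
    rw [mul_assoc] at hac hne
    rw [Semigroup.mem_center_iff] at hac
    refine ⟨(1 - e) * c, fun x => ?_, fun x => ?_, fun h => hne ?_⟩
    · rw [hdc x, sub_self]
      exact I.zero_mem
    · rw [hac x, sub_self]
      exact I.zero_mem
    · rw [← h_id _ h, ← mul_assoc, ← he_comm a, mul_assoc, ← mul_assoc e, mul_sub, mul_one, hee,
        sub_self, zero_mul, mul_zero]
end

section
/- Let R be an invariant centrally essential unital ring, i.e., every right ideal of R and every left ideal of R is a two-sided ideal. Then every non-nilpotent minimal ideal I of R is a field: I has a multiplicative identity, is commutative, and every nonzero element of I has a multiplicative inverse in I. -/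
/-- A nonzero central element of a minimal two-sided ideal `I` generates `I` as a left ideal. -/
theorem exists_mul_eq_of_mem_minimal {R : Type*} [Ring R] {I : AddSubgroup R}
    (hI : ∀ x ∈ I, ∀ r : R, x * r ∈ I ∧ r * x ∈ I)
    (hImin : ∀ I' : AddSubgroup R, (∀ x ∈ I', ∀ r : R, x * r ∈ I' ∧ r * x ∈ I') → I' ≤ I →
      I' = ⊥ ∨ I' = I)
    {w : R} (hwI : w ∈ I) (hw : ∀ r, w * r = r * w) (hw0 : w ≠ 0) {x : R} (hx : x ∈ I) :
    ∃ t, t * w = x := by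
  have hle : (AddMonoidHom.mulRight w).range ≤ I := by
    rintro _ ⟨t, rfl⟩
    exact (hI w hwI t).2
  rcases hImin (AddMonoidHom.mulRight w).range (by
    rintro _ ⟨t, rfl⟩ r
    exact ⟨⟨t * r, by simp [mul_assoc, hw]⟩, ⟨r * t, by simp [mul_assoc]⟩⟩) hle with h | h
  · have hmem : w ∈ (AddMonoidHom.mulRight w).range := ⟨1, by simp⟩
    rw [h] at hmem
    exact absurd (AddSubgroup.mem_bot.mp hmem) hw0
  · rw [← h] at hx
    exact hx

/-- Let `R` be an invariant centrally essential unital ring (every right ideal and every left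
ideal of `R` is two-sided).  Then every non-nilpotent minimal (two-sided) ideal `I` of `R` is
a field: `I` has a multiplicative identity, is commutative, and every nonzero element of `I`
has a multiplicative inverse in `I`. -/
theorem stmt7 (R : Type*) [Ring R] (hR : IsCentrallyEssential R)
    (hRightInv : ∀ K : AddSubgroup R, (∀ x ∈ K, ∀ r : R, x * r ∈ K) →
      ∀ x ∈ K, ∀ r : R, r * x ∈ K)
    (hLeftInv : ∀ K : AddSubgroup R, (∀ x ∈ K, ∀ r : R, r * x ∈ K) →
      ∀ x ∈ K, ∀ r : R, x * r ∈ K)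
    (I : AddSubgroup R) (hItwoSided : ∀ x ∈ I, ∀ r : R, x * r ∈ I ∧ r * x ∈ I)
    (hIne : I ≠ ⊥)
    (hImin : ∀ I' : AddSubgroup R, (∀ x ∈ I', ∀ r : R, x * r ∈ I' ∧ r * x ∈ I') → I' ≤ I →
      I' = ⊥ ∨ I' = I)
    (hInonnilpotent : ∀ n : ℕ, 0 < n →
      ∃ f : Fin n → R, (∀ i, f i ∈ I) ∧ (List.ofFn f).prod ≠ 0) :
    ∃ e ∈ I, (∀ x ∈ I, e * x = x ∧ x * e = x) ∧
      (∀ x ∈ I, ∀ y ∈ I, x * y = y * x) ∧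
      (∀ x ∈ I, x ≠ 0 → ∃ y ∈ I, x * y = e) := by
  have hcen : ∀ {a : R}, a ∈ Set.center R → ∀ r, a * r = r * a := fun ha r =>
    (Semigroup.mem_center_iff.mp ha r).symm
  have hgen : ∀ w ∈ I, (∀ r, w * r = r * w) → w ≠ 0 → ∀ x ∈ I, ∃ t, t * w = x :=
    fun w hwI hw hw0 x hx => exists_mul_eq_of_mem_minimal hItwoSided hImin hwI hw hw0 hx
  obtain ⟨a, haI, ha0⟩ := I.ne_bot_iff_exists_ne_zero.mp hIne |>.elim
    fun a ha => (⟨a.1, a.2, fun h => ha (Subtype.ext h)⟩ : ∃ a : R, a ∈ I ∧ a ≠ 0)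
  obtain ⟨c, -, hz, hz0⟩ := hR a ha0
  have hzI := (hItwoSided a haI c).1
  generalize a * c = z at hz hz0 hzI
  replace hz := hcen hz
  have hzz : z * z ≠ 0 := by
    intro h
    obtain ⟨f, hf, hprod⟩ := hInonnilpotent 2 two_pos
    obtain ⟨s, hs⟩ := hgen z hzI hz hz0 _ (hf 0)
    obtain ⟨t, ht⟩ := hgen z hzI hz hz0 _ (hf 1)
    apply hprod
    simp only [List.ofFn_succ, List.ofFn_zero, List.prod_cons, List.prod_nil, mul_one,
      Fin.succ_zero_eq_one, ← hs, ← ht]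
    rw [mul_assoc, hz, mul_assoc t, h, mul_zero, mul_zero]
  obtain ⟨r, hr⟩ := hgen (z * z) (hItwoSided z hzI z).1
    (fun r => by rw [mul_assoc, hz r, ← mul_assoc, hz r, mul_assoc]) hzz z hzI
  have heI : r * z ∈ I := (hItwoSided z hzI r).2
  have hez : r * z * z = z := by rw [mul_assoc, hr]
  generalize r * z = e at heI hez
  have hid : ∀ x ∈ I, e * x = x ∧ x * e = x := by
    intro x hx
    obtain ⟨s, rfl⟩ := hgen z hzI hz hz0 x hx
    constructor
    · rw [← hz, ← mul_assoc, hez]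
    · rw [mul_assoc, hz, hez]
  have he : ∀ s, e * s = s * e := fun s => by
    rw [← (hid _ (hItwoSided e heI s).1).2, mul_assoc, (hid _ (hItwoSided e heI s).2).1]
  have hcomm : ∀ x ∈ I, ∀ s, x * s = s * x := by
    intro x hx s
    by_cases hx0 : x = 0
    · simp [hx0]
    obtain ⟨c, hc, hxc, hxc0⟩ := hR x hx0
    replace hc := hcen hc
    replace hxc := hcen hxc
    have hce0 : c * e ≠ 0 := fun h => hxc0 <| by
      rw [← (hid x hx).2, mul_assoc, ← hc, h, mul_zero]
    obtain ⟨t, ht⟩ := hgen (c * e) (hItwoSided e heI c).2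
      (fun s => by rw [mul_assoc, he, ← mul_assoc, hc, mul_assoc]) hce0 e heI
    have hann : c * (x * s - s * x) = 0 := by
      rw [mul_sub, sub_eq_zero, ← mul_assoc, hc x, hxc, hc (s * x), mul_assoc]
    have hmem : x * s - s * x ∈ I :=
      I.sub_mem (hItwoSided x hx s).1 (hItwoSided x hx s).2
    rw [← sub_eq_zero, ← (hid _ hmem).1, ← ht, mul_assoc, mul_assoc, (hid _ hmem).1, hann,
      mul_zero]
  refine ⟨e, heI, hid, fun x hx y _ => hcomm x hx y, fun x hx hx0 => ?_⟩
  obtain ⟨t, ht⟩ := hgen x hx (hcomm x hx) hx0 e heI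
  refine ⟨t * e, (hItwoSided e heI t).2, ?_⟩
  rw [← mul_assoc, hcomm x hx, ht, (hid e heI).1]
end

section
/- Let A be a commutative unital ring, let a, b be invertible elements of A, and let R = (a,b,A) be the quaternion algebra over A. Then R is a centrally essential ring if and only if the annihilator Ann_A(2) = {t ∈ A : 2t = 0} is an essential ideal of A. -/
open Quaternion

/-- The annihilator ideal `Ann_A(2) = {t ∈ A : 2t = 0}` of `2` in a commutative ring `A`. -/
def annTwo (A : Type*) [CommRing A] : Ideal A where
  carrier := {t | 2 * t = 0}
  add_mem' := by
    intro x y hx hy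
    simp only [Set.mem_setOf_eq] at *
    rw [mul_add, hx, hy, add_zero]
  zero_mem' := by simp
  smul_mem' := by
    intro c x hx
    simp only [Set.mem_setOf_eq, smul_eq_mul] at *
    rw [mul_left_comm, hx, mul_zero]

theorem mem_annTwo {A : Type*} [CommRing A] {t : A} : t ∈ annTwo A ↔ 2 * t = 0 := Iff.rfl

/-- For invertible `a`, a quaternion is central iff its imaginary components are
annihilated by `2`. -/
theorem QuaternionAlgebra.mem_center_iff {A : Type*} [CommRing A] {a b : A} (ha : IsUnit a)
    {x : ℍ[A, a, b]} :
    x ∈ Set.center ℍ[A, a, b] ↔ 2 * x.imI = 0 ∧ 2 * x.imJ = 0 ∧ 2 * x.imK = 0 := by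
  rw [Semigroup.mem_center_iff]
  constructor
  · intro h
    have hi := h ⟨0, 1, 0, 0⟩
    have hj := h ⟨0, 0, 1, 0⟩
    simp only [QuaternionAlgebra.ext_iff, re_mul, imI_mul, imJ_mul, imK_mul] at hi hj
    refine ⟨?_, ?_, ?_⟩
    · linear_combination -hj.2.2.2
    · linear_combination hi.2.2.2
    · apply ha.mul_left_cancel
      linear_combination hi.2.2.1
  · rintro ⟨h1, h2, h3⟩ y
    ext <;> simp only [re_mul, imI_mul, imJ_mul, imK_mul]
    · ring
    · linear_combination b * y.imK * h2 - b * y.imJ * h3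
    · linear_combination a * y.imI * h3 - a * y.imK * h1
    · linear_combination y.imI * h2 - y.imJ * h1

/-- If `Ann_A(2)` is essential, every nonzero element of `A` has a nonzero multiple in it. -/
theorem exists_mul_mem_annTwo {A : Type*} [CommRing A]
    (h : ∀ J : Ideal A, J ≠ ⊥ → annTwo A ⊓ J ≠ ⊥) {y : A} (hy : y ≠ 0) :
    ∃ s : A, s * y ≠ 0 ∧ 2 * (s * y) = 0 := by
  obtain ⟨t, ⟨ht, htJ⟩, ht0⟩ := Submodule.exists_mem_ne_zero_of_ne_bot
    (h (Ideal.span {y}) (by simpa [Ideal.span_singleton_eq_bot] using hy))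
  obtain ⟨s, rfl⟩ := Ideal.mem_span_singleton'.1 htJ
  exact ⟨s, ht0, ht⟩

/-- If `Ann_A(2)` is essential, then for any linear form `f` a nonzero vector has a nonzero
multiple whose value under `f` is annihilated by `2`. -/
theorem exists_smul_ne_zero_two_mul_eq_zero {A M : Type*} [CommRing A] [AddCommGroup M]
    [Module A M] (h : ∀ J : Ideal A, J ≠ ⊥ → annTwo A ⊓ J ≠ ⊥) (f : M →ₗ[A] A) {x : M}
    (hx : x ≠ 0) : ∃ s : A, s • x ≠ 0 ∧ 2 * f (s • x) = 0 := by
  by_cases hy : f x = 0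
  · exact ⟨1, by simpa using hx, by simp [hy]⟩
  · obtain ⟨s, hs, hs2⟩ := exists_mul_mem_annTwo h hy
    refine ⟨s, fun h0 => hs ?_, by simpa using hs2⟩
    simpa using congrArg f h0

/-- Let `A` be a commutative unital ring and `a, b` invertible elements of `A`.
The quaternion algebra `(a,b,A)` is centrally essential if and only if `Ann_A(2)` is an
essential ideal of `A`. -/
theorem stmt9 (A : Type*) [CommRing A] (a b : A) (ha : IsUnit a) (hb : IsUnit b) :
    IsCentrallyEssential ℍ[A, a, b] ↔
      ∀ J : Ideal A, J ≠ ⊥ → annTwo A ⊓ J ≠ ⊥ := by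
  constructor
  · intro h J hJ hbot
    obtain ⟨t, htJ, ht0⟩ := Submodule.exists_mem_ne_zero_of_ne_bot hJ
    have eq_zero : ∀ r : A, 2 * (t * r) = 0 → t * r = 0 := fun r hr => by
      have hmem : t * r ∈ annTwo A ⊓ J := ⟨mem_annTwo.2 hr, J.mul_mem_right r htJ⟩
      simpa [hbot] using hmem
    obtain ⟨c, hc, hm, hne⟩ := h (⟨0, t, 0, 0⟩ : ℍ[A, a, b])
      fun h0 => ht0 (congrArg QuaternionAlgebra.imI h0)
    obtain ⟨hc1, hc2, hc3⟩ := (QuaternionAlgebra.mem_center_iff ha).1 hc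
    have hm1 := ((QuaternionAlgebra.mem_center_iff ha).1 hm).1
    simp only [QuaternionAlgebra.imI_mul] at hm1
    have h0 := eq_zero c.re (by linear_combination hm1)
    have h1 := eq_zero c.imI (by linear_combination t * hc1)
    have h2 := eq_zero c.imJ (by linear_combination t * hc2)
    have h3 := eq_zero c.imK (by linear_combination t * hc3)
    apply hne
    ext <;> simp only [QuaternionAlgebra.re_mul, QuaternionAlgebra.imI_mul,
      QuaternionAlgebra.imJ_mul, QuaternionAlgebra.imK_mul, QuaternionAlgebra.re_zero,
      QuaternionAlgebra.imI_zero, QuaternionAlgebra.imJ_zero, QuaternionAlgebra.imK_zero]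
    · linear_combination a * h1
    · linear_combination h0
    · linear_combination a * h3
    · linear_combination h2
  · intro h x hx
    obtain ⟨r, hr, hr2⟩ := exists_smul_ne_zero_two_mul_eq_zero h
      (QuaternionAlgebra.imIₗ a 0 b) hx
    obtain ⟨s, hs, hs2⟩ := exists_smul_ne_zero_two_mul_eq_zero h
      (QuaternionAlgebra.imJₗ a 0 b) hr
    obtain ⟨t, ht, ht2⟩ := exists_smul_ne_zero_two_mul_eq_zero h
      (QuaternionAlgebra.imKₗ a 0 b) hs
    have hmul : x * algebraMap A ℍ[A, a, b] (t * s * r) = t • s • r • x := by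
      rw [← Algebra.commutes, ← Algebra.smul_def, mul_smul, mul_smul]
    refine ⟨algebraMap A _ (t * s * r), ?_, ?_, by rwa [hmul]⟩
    · exact Semigroup.mem_center_iff.2 fun y => (Algebra.commutes _ y).symm
    · rw [hmul, QuaternionAlgebra.mem_center_iff ha]
      simp only [QuaternionAlgebra.imIₗ, QuaternionAlgebra.imJₗ, QuaternionAlgebra.imKₗ,
        LinearMap.coe_mk, AddHom.coe_mk, QuaternionAlgebra.imI_smul,
        QuaternionAlgebra.imJ_smul, QuaternionAlgebra.imK_smul, smul_eq_mul] at hr2 hs2 ht2 ⊢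
      exact ⟨by linear_combination t * s * hr2, by linear_combination t * hs2, ht2⟩
end

section
/- Let R be a commutative integral domain of characteristic 0 and let G be any group. Then the group ring RG is right nonsingular, i.e., every element of RG whose right annihilator is an essential right ideal of RG is zero. -/
open MonoidAlgebra

section RightSingular

/-- An element `x` of a ring is right singular if its right annihilator meets every nonzero
principal right ideal nontrivially. -/
def IsRightSingular {S : Type*} [Ring S] (x : S) : Prop :=
  ∀ y : S, y ≠ 0 → ∃ t, y * t ≠ 0 ∧ x * (y * t) = 0

/-- A finite family that is not identically zero can be multiplied on the right by a single element
so that it stays nonzero and lands in the right annihilator of a given right singular element. -/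
theorem IsRightSingular.exists_mul_ne_zero {S ι : Type*} [Ring S] {x : S}
    (hx : IsRightSingular x) (s : Finset ι) (y : ι → S) (hy : ∃ i ∈ s, y i ≠ 0) :
    ∃ t, (∃ i ∈ s, y i * t ≠ 0) ∧ ∀ i ∈ s, x * (y i * t) = 0 := by
  classical
  induction s using Finset.induction_on with
  | empty => simp at hy
  | insert a s _ ih =>
    obtain ⟨t, ht, hs⟩ : ∃ t, (∃ i ∈ insert a s, y i * t ≠ 0) ∧ ∀ i ∈ s, x * (y i * t) = 0 := by
      by_cases h : ∃ i ∈ s, y i ≠ 0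
      · obtain ⟨t, ⟨i, hi, hit⟩, ht⟩ := ih h
        exact ⟨t, ⟨i, Finset.mem_insert_of_mem hi, hit⟩, ht⟩
      · push Not at h
        exact ⟨1, by simpa using hy, fun i hi ↦ by simp [h i hi]⟩
    by_cases ha : y a * t = 0
    · exact ⟨t, ht, by simpa [ha] using hs⟩
    · obtain ⟨u, hu, hxu⟩ := hx _ ha
      refine ⟨t * u, ⟨a, Finset.mem_insert_self a s, by rwa [← mul_assoc]⟩, fun i hi ↦ ?_⟩
      rcases Finset.mem_insert.mp hi with rfl | hi
      · rwa [← mul_assoc (y i)]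
      · rw [← mul_assoc (y i), ← mul_assoc x, hs i hi, zero_mul]

end RightSingular

section Adjoint

variable {G : Type*} [Group G]

/-- The conjugate-linear involution of a complex group algebra that inverts group elements. -/
noncomputable def groupAlgebraAdjoint (x : MonoidAlgebra ℂ G) : MonoidAlgebra ℂ G :=
  MonoidAlgebra.map (starRingEnd ℂ : ℂ →+ ℂ) (mapDomain (·⁻¹) x)

theorem groupAlgebraAdjoint_zero : groupAlgebraAdjoint (0 : MonoidAlgebra ℂ G) = 0 := by
  simp [groupAlgebraAdjoint]

theorem groupAlgebraAdjoint_add (x y : MonoidAlgebra ℂ G) :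
    groupAlgebraAdjoint (x + y) = groupAlgebraAdjoint x + groupAlgebraAdjoint y := by
  simp [groupAlgebraAdjoint, mapDomain_add, MonoidAlgebra.map_add]

theorem groupAlgebraAdjoint_single (g : G) (a : ℂ) :
    groupAlgebraAdjoint (single g a) = single g⁻¹ (starRingEnd ℂ a) := by
  simp [groupAlgebraAdjoint]

theorem groupAlgebraAdjoint_mul (x y : MonoidAlgebra ℂ G) :
    groupAlgebraAdjoint (x * y) = groupAlgebraAdjoint y * groupAlgebraAdjoint x := by
  induction x using MonoidAlgebra.induction_linear with
  | zero => simp [groupAlgebraAdjoint_zero]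
  | add x x' hx hx' => simp [add_mul, mul_add, groupAlgebraAdjoint_add, hx, hx']
  | single g a =>
    induction y using MonoidAlgebra.induction_linear with
    | zero => simp [groupAlgebraAdjoint_zero]
    | add y y' hy hy' => simp [add_mul, mul_add, groupAlgebraAdjoint_add, hy, hy']
    | single h b => simp [groupAlgebraAdjoint_single, single_mul_single, mul_comm]

theorem groupAlgebraAdjoint_adjoint (x : MonoidAlgebra ℂ G) :
    groupAlgebraAdjoint (groupAlgebraAdjoint x) = x := by
  induction x using MonoidAlgebra.induction_linear with
  | zero => simp [groupAlgebraAdjoint_zero]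
  | add x x' hx hx' => simp [groupAlgebraAdjoint_add, hx, hx']
  | single g a => simp [groupAlgebraAdjoint_single]

theorem coeff_groupAlgebraAdjoint_inv (x : MonoidAlgebra ℂ G) (g : G) :
    (groupAlgebraAdjoint x).coeff g⁻¹ = starRingEnd ℂ (x.coeff g) := by
  simp [groupAlgebraAdjoint, mapDomain, Finsupp.mapDomain_apply inv_injective]

theorem eq_zero_of_groupAlgebraAdjoint_mul_self {x : MonoidAlgebra ℂ G}
    (hx : groupAlgebraAdjoint x * x = 0) : x = 0 := by
  have h : ∑ g ∈ x.coeff.support, Complex.normSq (x.coeff g) = 0 := by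
    have h := coeff_mul_apply_right (groupAlgebraAdjoint x) x 1
    simp only [hx, one_mul, coeff_groupAlgebraAdjoint_inv, Finsupp.sum, coeff_zero,
      Finsupp.coe_zero, Pi.zero_apply, ← Complex.normSq_eq_conj_mul_self] at h
    exact_mod_cast h.symm
  rw [Finset.sum_eq_zero_iff_of_nonneg fun _ _ ↦ Complex.normSq_nonneg _] at h
  ext g
  by_contra hg
  exact hg (Complex.normSq_eq_zero.mp (h g (Finsupp.mem_support_iff.mpr hg)))

theorem IsRightSingular.eq_zero_of_complex {x : MonoidAlgebra ℂ G} (hx : IsRightSingular x) :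
    x = 0 := by
  refine eq_zero_of_groupAlgebraAdjoint_mul_self (by_contra fun hs ↦ ?_)
  obtain ⟨t, hst, hxst⟩ := hx _ hs
  refine hst (eq_zero_of_groupAlgebraAdjoint_mul_self ?_)
  rw [groupAlgebraAdjoint_mul, groupAlgebraAdjoint_mul, groupAlgebraAdjoint_adjoint,
    mul_assoc, mul_assoc, hxst, mul_zero, mul_zero]

end Adjoint

section BaseChange

variable {G : Type*} [Group G]

theorem map_linearMap_mul_mapRingHom {F L : Type*} [CommRing F] [CommRing L] [Algebra F L]
    (φ : L →ₗ[F] F) (y : MonoidAlgebra L G) (t : MonoidAlgebra F G) :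
    MonoidAlgebra.map (φ : L →+ F) (y * mapRingHom G (algebraMap F L) t) =
      MonoidAlgebra.map (φ : L →+ F) y * t := by
  induction y using MonoidAlgebra.induction_linear with
  | zero => simp
  | add y y' hy hy' => simp [add_mul, MonoidAlgebra.map_add, hy, hy']
  | single g a =>
    induction t using MonoidAlgebra.induction_linear with
    | zero => simp
    | add t t' ht ht' => simp only [mul_add, map_add, MonoidAlgebra.map_add, ht, ht']
    | single h b =>
      simp [single_mul_single, mul_comm a, mul_comm (φ a), ← Algebra.smul_def]

theorem map_linearMap_mapRingHom_mul {F L : Type*} [CommRing F] [CommRing L] [Algebra F L]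
    (φ : L →ₗ[F] F) (t : MonoidAlgebra F G) (y : MonoidAlgebra L G) :
    MonoidAlgebra.map (φ : L →+ F) (mapRingHom G (algebraMap F L) t * y) =
      t * MonoidAlgebra.map (φ : L →+ F) y := by
  induction y using MonoidAlgebra.induction_linear with
  | zero => simp
  | add y y' hy hy' => simp [mul_add, MonoidAlgebra.map_add, hy, hy']
  | single g a =>
    induction t using MonoidAlgebra.induction_linear with
    | zero => simp
    | add t t' ht ht' => simp only [add_mul, map_add, MonoidAlgebra.map_add, ht, ht']
    | single h b => simp [single_mul_single, ← Algebra.smul_def]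

theorem eq_zero_of_forall_map_coord {F L ι : Type*} [CommRing F] [CommRing L] [Algebra F L]
    (b : Module.Basis ι F L) {y : MonoidAlgebra L G}
    (hy : ∀ i, MonoidAlgebra.map (b.coord i : L →+ F) y = 0) : y = 0 := by
  ext g
  refine b.ext_elem fun i ↦ ?_
  simpa using congrArg (fun z ↦ z.coeff g) (hy i)

theorem IsRightSingular.of_mapRingHom {F L : Type*} [Field F] [Field L] [Algebra F L]
    {x : MonoidAlgebra F G} (hx : IsRightSingular (mapRingHom G (algebraMap F L) x)) :
    IsRightSingular x := by
  intro y hy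
  obtain ⟨t, hyt, hxyt⟩ := hx (mapRingHom G (algebraMap F L) y) fun h ↦
    hy (map_injective (M := G) (algebraMap F L : F →+ L) (algebraMap F L).injective
      (h.trans (map_zero (MonoidAlgebra.mapRingHom G (algebraMap F L))).symm))
  obtain ⟨i, hi⟩ := not_forall.mp
    (mt (eq_zero_of_forall_map_coord (Module.Basis.ofVectorSpace F L)) hyt)
  refine ⟨MonoidAlgebra.map ((Module.Basis.ofVectorSpace F L).coord i : L →+ F) t, ?_, ?_⟩
  · rwa [← map_linearMap_mapRingHom_mul]
  · rw [← map_linearMap_mapRingHom_mul, ← map_linearMap_mapRingHom_mul, hxyt,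
      MonoidAlgebra.map_zero]

theorem IsRightSingular.mapRingHom {F L : Type*} [Field F] [Field L] [Algebra F L]
    {x : MonoidAlgebra F G} (hx : IsRightSingular x) :
    IsRightSingular (mapRingHom G (algebraMap F L) x) := by
  classical
  intro y hy
  let b := Module.Basis.ofVectorSpace F L
  let c := fun i ↦ MonoidAlgebra.map (b.coord i : L →+ F) y
  let s := y.coeff.support.biUnion fun g ↦ (b.repr (y.coeff g)).support
  have hc : ∀ i ∉ s, c i = 0 := fun i hi ↦ by
    ext g
    simp only [s, Finset.mem_biUnion, Finsupp.mem_support_iff, not_exists, not_and, not_not] at hi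
    by_cases hg : y.coeff g = 0
    · simp [c, hg]
    · simpa [c] using hi g hg
  obtain ⟨i, hi⟩ := not_forall.mp (mt (eq_zero_of_forall_map_coord b) hy)
  obtain ⟨t, ⟨j, _, hjt⟩, ht⟩ :=
    hx.exists_mul_ne_zero s c ⟨i, by_contra fun h ↦ hi (hc i h), hi⟩
  refine ⟨MonoidAlgebra.mapRingHom G (algebraMap F L) t, fun h ↦ hjt ?_,
    eq_zero_of_forall_map_coord b fun k ↦ ?_⟩
  · rw [← map_linearMap_mul_mapRingHom, h, MonoidAlgebra.map_zero]
  · rw [map_linearMap_mapRingHom_mul, map_linearMap_mul_mapRingHom]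
    by_cases hk : k ∈ s
    · exact ht k hk
    · simp [show MonoidAlgebra.map (b.coord k : L →+ F) y = 0 from hc k hk]

theorem IsRightSingular.mapRingHom_fractionRing {R K : Type*} [CommRing R] [IsDomain R] [Field K]
    [Algebra R K] [IsFractionRing R K] {x : MonoidAlgebra R G} (hx : IsRightSingular x) :
    IsRightSingular (MonoidAlgebra.mapRingHom G (algebraMap R K) x) := by
  intro y hy
  obtain ⟨d, hd⟩ := IsLocalization.exist_integer_multiples (nonZeroDivisors R)
    y.coeff.support y.coeff
  have hinj : Function.Injective (MonoidAlgebra.mapRingHom G (algebraMap R K)) :=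
    map_injective _ (IsFractionRing.injective R K)
  have hd0 : algebraMap R K d ≠ 0 := IsFractionRing.to_map_ne_zero_of_mem_nonZeroDivisors d.2
  obtain ⟨z, hz⟩ : ∃ z, MonoidAlgebra.mapRingHom G (algebraMap R K) z = algebraMap R K d • y := by
    have h : algebraMap R K d • y ∈ Set.range (MonoidAlgebra.map (M := G)
        (algebraMap R K : R →+ K)) := by
      rw [range_map]
      intro g
      by_cases hg : y.coeff g = 0
      · exact ⟨0, by simp [hg]⟩
      · obtain ⟨r, hr⟩ := hd g (Finsupp.mem_support_iff.mpr hg)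
        exact ⟨r, by simpa [Algebra.smul_def] using hr⟩
    exact h
  obtain ⟨t, hzt, hxzt⟩ := hx z fun h ↦ smul_ne_zero hd0 hy (by rw [← hz, h, map_zero])
  have key : algebraMap R K d • (y * MonoidAlgebra.mapRingHom G (algebraMap R K) t) =
      MonoidAlgebra.mapRingHom G (algebraMap R K) (z * t) := by
    rw [map_mul, hz, smul_mul_assoc]
  refine ⟨MonoidAlgebra.mapRingHom G (algebraMap R K) t, fun h ↦ hzt (hinj ?_), ?_⟩
  · rw [← key, h, smul_zero, map_zero]
  · refine (smul_eq_zero_iff_right hd0).mp ?_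
    rw [← mul_smul_comm, key, ← map_mul, hxzt, map_zero]

end BaseChange

open Cardinal in
theorem nonempty_ringHom_complex_of_countable (F : Type*) [Field F] [CharZero F] [Countable F] :
    Nonempty (F →+* ℂ) := by
  obtain ⟨s, hs⟩ := exists_isTranscendenceBasis ℚ F
  obtain ⟨t, ht⟩ := exists_isTranscendenceBasis ℚ ℂ
  have htc : #t = 𝔠 := by
    rw [← mk_complex]
    exact (IsAlgClosed.cardinal_eq_cardinal_transcendence_basis_of_aleph0_lt' _ ht
      mk_le_aleph0 (by simpa using aleph0_lt_continuum)).symm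
  obtain ⟨j⟩ : Nonempty (s ↪ t) := by
    rw [← lift_mk_le', htc]
    exact (lift_le_aleph0.mpr mk_le_aleph0).trans (by simpa using aleph0_le_continuum)
  have hj : AlgebraicIndependent ℚ fun i ↦ (j i : ℂ) := ht.1.comp j j.injective
  have := hs.isAlgebraic
  let f : Algebra.adjoin ℚ (Set.range ((↑) : s → F)) →+* ℂ :=
    (MvPolynomial.aeval fun i ↦ (j i : ℂ)).toRingHom.comp
      hs.1.aevalEquiv.symm.toRingEquiv.toRingHom
  have hf : Function.Injective f := by
    have h : Function.Injective (MvPolynomial.aeval (R := ℚ) fun i ↦ (j i : ℂ)) := hj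
    exact h.comp hs.1.aevalEquiv.symm.injective
  let := f.toAlgebra
  have : FaithfulSMul (Algebra.adjoin ℚ (Set.range ((↑) : s → F))) ℂ :=
    (faithfulSMul_iff_algebraMap_injective _ _).mpr hf
  exact ⟨(IsAlgClosed.lift : F →ₐ[Algebra.adjoin ℚ (Set.range ((↑) : s → F))] ℂ).toRingHom⟩

theorem IsRightSingular.eq_zero_of_field {K G : Type*} [Field K] [CharZero K] [Group G]
    {x : MonoidAlgebra K G} (hx : IsRightSingular x) : x = 0 := by
  let F := Subfield.closure (x.coeff '' x.coeff.support)
  have : Countable F := by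
    rw [← Cardinal.mk_le_aleph0_iff]
    exact (Subfield.cardinalMk_closure_le_max _).trans (max_le
      (Cardinal.mk_le_aleph0_iff.mpr (x.coeff.support.countable_toSet.image _).to_subtype) le_rfl)
  obtain ⟨z, hz⟩ : ∃ z, MonoidAlgebra.mapRingHom G (algebraMap F K) z = x := by
    have h : x ∈ Set.range (MonoidAlgebra.map (M := G) (algebraMap F K : F →+ K)) := by
      rw [range_map]
      intro g
      by_cases hg : x.coeff g = 0
      · exact ⟨0, by simp [hg]⟩
      · exact ⟨⟨x.coeff g, Subfield.subset_closure
          ⟨g, Finsupp.mem_support_iff.mpr hg, rfl⟩⟩, rfl⟩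
    exact h
  obtain ⟨f⟩ := nonempty_ringHom_complex_of_countable F
  let := f.toAlgebra
  have hzs : IsRightSingular z := .of_mapRingHom (L := K) (by rwa [hz])
  have h := (IsRightSingular.mapRingHom (L := ℂ) hzs).eq_zero_of_complex
  have hz0 : z = 0 := map_injective (M := G) (algebraMap F ℂ : F →+ ℂ) (algebraMap F ℂ).injective
    (h.trans (map_zero (MonoidAlgebra.mapRingHom G (algebraMap F ℂ))).symm)
  exact hz.symm.trans (by rw [hz0, map_zero])

/-- Let `R` be a commutative integral domain of characteristic `0` and let `G` be any group.
Then the group ring `RG` is right nonsingular: every element of `RG` whose right annihilator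
is an essential right ideal of `RG` is zero.  Right ideals are encoded as additive subgroups
closed under right multiplication. -/
theorem stmt10 (R : Type*) [CommRing R] [IsDomain R] [CharZero R]
    (G : Type*) [Group G] :
    ∀ x : MonoidAlgebra R G,
      (∀ J : AddSubgroup (MonoidAlgebra R G),
        (∀ t ∈ J, ∀ s : MonoidAlgebra R G, t * s ∈ J) → J ≠ ⊥ →
          ∃ t ∈ J, t ≠ 0 ∧ x * t = 0) →
      x = 0 := by
  intro x hx
  have hsing : IsRightSingular x := fun y hy ↦ by
    obtain ⟨_, ⟨s, rfl⟩, h0, h⟩ := hx (AddMonoidHom.mulLeft y).range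
      (by rintro _ ⟨a, rfl⟩ s; exact ⟨a * s, by simp [mul_assoc]⟩)
      (fun h ↦ hy (by
        have : y ∈ (AddMonoidHom.mulLeft y).range := ⟨1, by simp⟩
        simpa [h] using this))
    exact ⟨s, h0, h⟩
  have : CharZero (FractionRing R) :=
    charZero_of_injective_algebraMap (IsFractionRing.injective R (FractionRing R))
  have h := (hsing.mapRingHom_fractionRing (K := FractionRing R)).eq_zero_of_field
  exact map_injective (M := G) (algebraMap R (FractionRing R) : R →+ FractionRing R)
    (IsFractionRing.injective R _) (h.trans (map_zero (mapRingHom G _)).symm)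
end

section
/- Let R be a (not necessarily commutative) domain of characteristic 0, i.e., a nonzero unital ring without zero divisors, and let G be any group. Then the group ring RG is centrally essential if and only if RG is commutative. -/
/-- A centrally essential ring whose center has no nonzero elements of square zero is
commutative. -/
theorem IsCentrallyEssential.mul_comm {A : Type*} [Ring A] (hA : IsCentrallyEssential A)
    (hred : ∀ z ∈ Set.center A, z * z = 0 → z = 0) (x y : A) : x * y = y * x := by
  by_contra hxy
  obtain ⟨c, hc, he, he0⟩ := hA (x * y - y * x) (sub_ne_zero.mpr hxy)
  set e := (x * y - y * x) * c with he_def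
  rw [Semigroup.mem_center_iff] at hc
  have he' := Semigroup.mem_center_iff.mp he
  have hcomm : e = (x * c) * y - y * (x * c) := by
    rw [he_def, sub_mul, mul_assoc x c y, ← hc y]; simp only [mul_assoc]
  by_cases hz : e * (x * c) = 0
  · refine he0 (hred e he ?_)
    nth_rewrite 2 [hcomm]
    rw [mul_sub, ← mul_assoc, hz, ← mul_assoc, ← he' y, mul_assoc, hz]
    simp
  · obtain ⟨k, hk, hw, hw0⟩ := hA _ hz
    have hk' := Semigroup.mem_center_iff.mp hk
    have hw' := Semigroup.mem_center_iff.mp hw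
    have hek : e * k = 0 := by
      refine hred _ (Set.mul_mem_center he hk) ?_
      have h1 : e * e * k = 0 := by
        have h2 : e * e * k = (e * (x * c) * k) * y - y * (e * (x * c) * k) := by
          nth_rewrite 2 [hcomm]
          rw [mul_sub, sub_mul, mul_assoc (e * (x * c)) k y, ← hk' y,
            mul_assoc e (x * c) k, ← mul_assoc y e, he' y]
          simp only [mul_assoc]
        rw [h2, hw' y, sub_self]
      rw [← mul_assoc, mul_assoc e k e, ← hk' e, ← mul_assoc e e k, h1, zero_mul]
    apply hw0
    rw [mul_assoc, hk', ← mul_assoc, hek, zero_mul]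

namespace MonoidAlgebra

open scoped ComplexConjugate

variable {G : Type*} [Group G]

/-- The conjugate-linear involution `∑ a_g g ↦ ∑ conj a_g g⁻¹` of a complex group algebra. -/
noncomputable def conjInv : MonoidAlgebra ℂ G →+ MonoidAlgebra ℂ G where
  toFun x := ofCoeff ((x.coeff.mapRange conj (map_zero _)).equivMapDomain (Equiv.inv G))
  map_zero' := by ext; simp
  map_add' x y := by ext; simp

@[simp]
theorem coeff_conjInv (x : MonoidAlgebra ℂ G) (g : G) :
    (conjInv x).coeff g = conj (x.coeff g⁻¹) := by
  simp [conjInv]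

@[simp]
theorem conjInv_single (g : G) (r : ℂ) : conjInv (single g r) = single g⁻¹ (conj r) := by
  simp [conjInv]

theorem conjInv_conjInv (x : MonoidAlgebra ℂ G) : conjInv (conjInv x) = x := by
  ext; simp

theorem conjInv_mul (x y : MonoidAlgebra ℂ G) :
    conjInv (x * y) = conjInv y * conjInv x := by
  induction x using MonoidAlgebra.induction_linear with
  | zero => simp
  | add x₁ x₂ h₁ h₂ => simp [add_mul, mul_add, h₁, h₂]
  | single g r =>
    induction y using MonoidAlgebra.induction_linear with
    | zero => simp
    | add y₁ y₂ h₁ h₂ => simp [add_mul, mul_add, h₁, h₂]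
    | single h s => simp [mul_comm]

theorem eq_zero_of_mul_conjInv_eq_zero {x : MonoidAlgebra ℂ G} (hx : x * conjInv x = 0) :
    x = 0 := by
  classical
  have h1 : (x * conjInv x).coeff 1 = ∑ g ∈ x.coeff.support, (Complex.normSq (x.coeff g) : ℂ) := by
    nth_rewrite 1 [← ofCoeff_coeff x, ← Finsupp.sum_single x.coeff]
    rw [Finsupp.sum, ofCoeff_sum, Finset.sum_mul, coeff_sum, Finsupp.finsetSum_apply]
    refine Finset.sum_congr rfl fun g _ => ?_
    change (single g (x.coeff g) * conjInv x).coeff 1 = _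
    simp [Complex.mul_conj]
  rw [hx, coeff_zero, Finsupp.zero_apply, ← Complex.ofReal_sum, eq_comm,
    Complex.ofReal_eq_zero, Finset.sum_eq_zero_iff_of_nonneg
      fun _ _ => Complex.normSq_nonneg _] at h1
  ext g
  by_contra hg
  exact hg (Complex.normSq_eq_zero.mp (h1 g (Finsupp.mem_support_iff.mpr hg)))

theorem mul_comm_of_forall_single {R : Type*} [CommRing R] {z : MonoidAlgebra R G}
    (hz : ∀ g, z * single g 1 = single g 1 * z) (x : MonoidAlgebra R G) : z * x = x * z := by
  induction x using MonoidAlgebra.induction_linear with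
  | zero => simp
  | add x₁ x₂ h₁ h₂ => simp [add_mul, mul_add, h₁, h₂]
  | single g r =>
    have : (single g r : MonoidAlgebra R G) = r • single g 1 := by simp
    rw [this, mul_smul_comm, smul_mul_assoc, hz]

theorem eq_zero_of_mul_self_eq_zero_complex {z : MonoidAlgebra ℂ G}
    (hz : ∀ g, z * single g 1 = single g 1 * z) (hsq : z * z = 0) : z = 0 := by
  apply eq_zero_of_mul_conjInv_eq_zero
  apply eq_zero_of_mul_conjInv_eq_zero
  rw [conjInv_mul, conjInv_conjInv, ← mul_assoc, mul_assoc z,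
    ← mul_comm_of_forall_single hz (conjInv z), ← mul_assoc, hsq]
  simp

/-- A nontrivial finitely generated commutative `ℚ`-algebra has a homomorphism to `ℂ`. -/
theorem nonempty_algHom_complex (B : Type*) [CommRing B] [Nontrivial B] [Algebra ℚ B]
    [Algebra.FiniteType ℚ B] : Nonempty (B →ₐ[ℚ] ℂ) := by
  obtain ⟨m, hm⟩ := Ideal.exists_maximal B
  have : Algebra.FiniteType ℚ (B ⧸ m) :=
    .of_surjective (Ideal.Quotient.mkₐ ℚ m) (Ideal.Quotient.mkₐ_surjective ℚ m)
  let : Field (B ⧸ m) := Ideal.Quotient.field m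
  have : Module.Finite ℚ (B ⧸ m) := finite_of_finite_type_of_isJacobsonRing ℚ (B ⧸ m)
  have : Algebra.IsAlgebraic ℚ (B ⧸ m) := .of_finite ℚ (B ⧸ m)
  let ψ : (B ⧸ m) →ₐ[ℚ] ℂ := IsAlgClosed.lift
  exact ⟨ψ.comp (Ideal.Quotient.mkₐ ℚ m)⟩

/-- Finitely many elements of a field of characteristic zero and a nonzero element `a` lie in a
subalgebra with a homomorphism to `ℂ` which does not vanish at `a`. -/
theorem exists_subalgebra_hom_complex {K : Type*} [Field K] [Algebra ℚ K] (s : Finset K) {a : K}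
    (ha : a ≠ 0) :
    ∃ (B : Subalgebra ℚ K) (φ : B →+* ℂ), (∀ x ∈ s, x ∈ B) ∧ ∀ b : B, (b : K) = a → φ b ≠ 0 := by
  classical
  let B := Algebra.adjoin ℚ ((insert a⁻¹ s : Finset K) : Set K)
  have : Algebra.FiniteType ℚ B := B.fg_iff_finiteType.mp (Subalgebra.fg_adjoin_finset _)
  obtain ⟨ψ⟩ := nonempty_algHom_complex B
  refine ⟨B, ψ, fun x hx => Algebra.subset_adjoin (by simp [hx]), fun b hb h0 => ?_⟩
  let c : B := ⟨a⁻¹, Algebra.subset_adjoin (by simp)⟩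
  have hbc : b * c = 1 := Subtype.ext (by simp [c, hb, ha])
  have h1 := congrArg (ψ : B →+* ℂ) hbc
  rw [map_mul, h0, zero_mul, map_one] at h1
  exact zero_ne_one h1

theorem mapRingHom_injective {R S : Type*} [Semiring R] [Semiring S] {f : R →+* S}
    (hf : Function.Injective f) : Function.Injective (mapRingHom G f) := by
  intro x y h
  ext g
  apply hf
  rw [← coeff_mapRingHom, h, coeff_mapRingHom]

/-- The center of the group algebra of a field of characteristic zero has no nonzero elements of
square zero. -/
theorem eq_zero_of_mul_self_eq_zero_field {K : Type*} [Field K] [CharZero K]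
    {z : MonoidAlgebra K G}
    (hz : ∀ g, z * single g 1 = single g 1 * z) (hsq : z * z = 0) : z = 0 := by
  classical
  by_contra hne
  obtain ⟨g, hg⟩ : ∃ g, z.coeff g ≠ 0 := by
    by_contra! h
    exact hne (by ext g; simpa using h g)
  obtain ⟨B, φ, hB, hφ⟩ := exists_subalgebra_hom_complex (z.coeff.support.image z.coeff) hg
  have hmem (h : G) : z.coeff h ∈ B := by
    by_cases h0 : z.coeff h = 0
    · rw [h0]; exact B.zero_mem
    · exact hB _ (Finset.mem_image_of_mem _ (Finsupp.mem_support_iff.mpr h0))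
  let w : MonoidAlgebra B G := ofCoeff <|
    Finsupp.onFinset z.coeff.support (fun h => ⟨z.coeff h, hmem h⟩) fun h h0 =>
      Finsupp.mem_support_iff.mpr fun h1 => h0 (Subtype.ext h1)
  have hinj := mapRingHom_injective (G := G) (f := B.val.toRingHom) Subtype.val_injective
  have hw : mapRingHom G B.val.toRingHom w = z := by
    ext h; rw [coeff_mapRingHom]; rfl
  have hwz : mapRingHom G φ w = 0 := by
    apply eq_zero_of_mul_self_eq_zero_complex
    · intro h
      have h1 : w * single h 1 = single h 1 * w := hinj (by
        rw [map_mul, map_mul, hw, mapRingHom_single, map_one, hz])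
      simpa using congrArg (mapRingHom G φ) h1
    · have h1 : w * w = 0 := hinj (by rw [map_mul, hw, hsq, map_zero])
      rw [← map_mul, h1, map_zero]
  refine hφ (w.coeff g) rfl ?_
  rw [← coeff_mapRingHom, hwz]
  rfl

/-- The center of the group ring of a commutative domain of characteristic zero has no nonzero
elements of square zero. -/
theorem eq_zero_of_mem_center_of_mul_self_eq_zero {R : Type*} [CommRing R] [IsDomain R]
    [CharZero R] {z : MonoidAlgebra R G} (hz : z ∈ Set.center (MonoidAlgebra R G))
    (hsq : z * z = 0) : z = 0 := by
  have : CharZero (FractionRing R) := IsFractionRing.charZero R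
  apply mapRingHom_injective (IsFractionRing.injective R (FractionRing R))
  rw [map_zero]
  apply eq_zero_of_mul_self_eq_zero_field
  · intro g
    simpa using congrArg (mapRingHom G (algebraMap R (FractionRing R)))
      (Semigroup.mem_center_iff.mp hz (single g 1)).symm
  · rw [← map_mul, hsq, map_zero]

theorem coeff_mem_center {R : Type*} [Semiring R] {z : MonoidAlgebra R G}
    (hz : z ∈ Set.center (MonoidAlgebra R G)) (g : G) : z.coeff g ∈ Set.center R := by
  rw [Semigroup.mem_center_iff] at hz ⊢
  intro r
  simpa using congrArg (fun x => x.coeff g) (hz (single 1 r))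

/-- A domain with a centrally essential group ring is commutative. -/
theorem mul_comm_of_isCentrallyEssential {R : Type*} [Ring R] [IsDomain R]
    (h : IsCentrallyEssential (MonoidAlgebra R G)) (a b : R) : a * b = b * a := by
  by_cases ha : a = 0
  · simp [ha]
  obtain ⟨c, hc, hac, hac0⟩ := h (single 1 a) (by simpa using ha)
  obtain ⟨g, hg⟩ : ∃ g, (single 1 a * c).coeff g ≠ 0 := by
    by_contra! h
    exact hac0 (by ext g; simpa using h g)
  have h1 := Semigroup.mem_center_iff.mp (coeff_mem_center hc g) b
  have h2 := Semigroup.mem_center_iff.mp (coeff_mem_center hac g) b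
  rw [coeff_single_one_mul] at h2 hg
  apply mul_right_cancel₀ (right_ne_zero_of_mul hg)
  rw [mul_assoc, h1, ← mul_assoc, ← h2, mul_assoc]

end MonoidAlgebra

/-- Let `R` be a (not necessarily commutative) domain of characteristic `0` and let `G` be
any group. Then the group ring `RG` is centrally essential iff `RG` is commutative. -/
theorem stmt12 (R : Type*) [Ring R] [IsDomain R] [CharZero R]
    (G : Type*) [Group G] :
    IsCentrallyEssential (MonoidAlgebra R G) ↔
      ∀ x y : MonoidAlgebra R G, x * y = y * x := by
  refine ⟨fun h => ?_, fun h a ha => ⟨1, Set.one_mem_center, ?_, by simpa using ha⟩⟩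
  · let : CommRing R :=
      { ‹Ring R› with mul_comm := MonoidAlgebra.mul_comm_of_isCentrallyEssential h }
    exact h.mul_comm fun z hz => MonoidAlgebra.eq_zero_of_mem_center_of_mul_self_eq_zero hz
  · exact Semigroup.mem_center_iff.mpr fun g => h _ _
end

section
/- Let R be a centrally essential unital ring of characteristic 2. Then the group ring RQ₈ of the quaternion group Q₈ of order 8 over R is a centrally essential ring. -/
/-- An element of a group ring whose coefficients are central in `R` and form a class function
is central. -/
theorem MonoidAlgebra.mem_center_of_coeff {R G : Type*} [Ring R] [Group G] {x : MonoidAlgebra R G}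
    (hx : ∀ g, x.coeff g ∈ Set.center R) (hconj : ∀ g h, x.coeff (g * h) = x.coeff (h * g)) :
    x ∈ Set.center (MonoidAlgebra R G) := by
  rw [Semigroup.mem_center_iff]
  intro y
  induction y using MonoidAlgebra.induction_linear with
  | zero => simp
  | add y z hy hz => rw [add_mul, mul_add, hy, hz]
  | single g r =>
    ext h
    rw [coeff_single_mul_apply, coeff_mul_single_apply, hconj]
    exact Semigroup.mem_center_iff.mp (hx _) r

/-- In `Q₈` any two elements commute up to the central involution `a 2`. -/
theorem QuaternionGroup.mul_eq_or_mul_eq_mul_a_two (g h : QuaternionGroup 2) :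
    g * h = h * g ∨ g * h = h * g * a 2 := by
  revert g h
  decide

/-- An element of `RQ₈` with central coefficients that is invariant under translation by the
central involution is central. -/
theorem QuaternionGroup.mem_center_of_coeff_mul_a_two {R : Type*} [Ring R]
    {x : MonoidAlgebra R (QuaternionGroup 2)} (hx : ∀ g, x.coeff g ∈ Set.center R)
    (hinv : ∀ g, x.coeff (g * a 2) = x.coeff g) :
    x ∈ Set.center (MonoidAlgebra R (QuaternionGroup 2)) := by
  refine MonoidAlgebra.mem_center_of_coeff hx fun g h ↦ ?_
  rcases mul_eq_or_mul_eq_mul_a_two g h with e | e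
  · rw [e]
  · rw [e, hinv]

/-- In a centrally essential ring, finitely many values of a nonzero family can be multiplied into
the center by a common central element that does not annihilate the whole family. -/
theorem IsCentrallyEssential.exists_forall_mul_mem_center {R ι : Type*} [Ring R]
    (hR : IsCentrallyEssential R) (f : ι → R) (hf : f ≠ 0) (s : Finset ι) :
    ∃ c ∈ Set.center R, (∀ i ∈ s, f i * c ∈ Set.center R) ∧ ∃ i, f i * c ≠ 0 := by
  classical
  induction s using Finset.induction_on with
  | empty =>
    obtain ⟨i, hi⟩ := Function.ne_iff.mp hf
    exact ⟨1, Set.one_mem_center, by simp, i, by simpa using hi⟩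
  | insert j s _ ih =>
    obtain ⟨c, hc, hs, hne⟩ := ih
    by_cases hj : f j * c = 0
    · refine ⟨c, hc, fun i hi ↦ ?_, hne⟩
      rcases Finset.mem_insert.mp hi with rfl | hi
      · rw [hj]
        exact Set.zero_mem_center
      · exact hs i hi
    · obtain ⟨d, hd, hmem, hne'⟩ := hR _ hj
      refine ⟨c * d, Set.mul_mem_center hc hd, fun i hi ↦ ?_, j, by rwa [← mul_assoc]⟩
      rw [← mul_assoc]
      rcases Finset.mem_insert.mp hi with rfl | hi
      · exact hmem
      · exact Set.mul_mem_center (hs i hi) hd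

/-- Let `R` be a centrally essential unital ring of characteristic `2`. Then the group ring
`RQ₈` of the quaternion group of order `8` over `R` is a centrally essential ring. -/
theorem stmt14 (R : Type*) [Ring R] [CharP R 2] (hR : IsCentrallyEssential R) :
    IsCentrallyEssential (MonoidAlgebra R (QuaternionGroup 2)) := by
  intro x hx
  have hx' : (x.coeff : QuaternionGroup 2 → R) ≠ 0 := fun h ↦
    hx (MonoidAlgebra.ext (DFunLike.coe_injective h))
  obtain ⟨c, hc, hmem, i, hi⟩ := hR.exists_forall_mul_mem_center x.coeff hx' Finset.univ
  set z : QuaternionGroup 2 := .a 2 with hz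
  have hzinv : z⁻¹ = z := by rw [hz]; decide
  have hzz : z * z = 1 := by rw [hz]; decide
  have hcoeff (g) : (x * .single 1 c).coeff g = x.coeff g * c := by simp
  have hc' : MonoidAlgebra.single 1 c ∈ Set.center (MonoidAlgebra R (QuaternionGroup 2)) := by
    rw [Semigroup.mem_center_iff]
    intro y
    ext g
    simpa using Semigroup.mem_center_iff.mp hc (y.coeff g)
  have hne : x * .single 1 c ≠ 0 := fun h ↦ hi (by rw [← hcoeff, h]; rfl)
  have hmem' (g) : (x * .single 1 c).coeff g ∈ Set.center R := by
    rw [hcoeff]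
    exact hmem g (Finset.mem_univ g)
  generalize hy : x * MonoidAlgebra.single 1 c = y at hne hmem'
  have hnorm (w : MonoidAlgebra R (QuaternionGroup 2)) (g) :
      (w * (1 + .single z 1)).coeff g = w.coeff g + w.coeff (g * z) := by
    rw [mul_add, mul_one, MonoidAlgebra.coeff_add, Finsupp.add_apply,
      MonoidAlgebra.coeff_mul_single_apply, hzinv, mul_one]
  have hcentral (w : MonoidAlgebra R (QuaternionGroup 2)) (hw : ∀ g, w.coeff g ∈ Set.center R) :
      w * (1 + .single z 1) ∈ Set.center (MonoidAlgebra R (QuaternionGroup 2)) := by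
    refine QuaternionGroup.mem_center_of_coeff_mul_a_two (fun g ↦ ?_) fun g ↦ ?_
    · rw [hnorm]
      exact Set.add_mem_center (hw _) (hw _)
    · rw [hnorm, hnorm, mul_assoc, hzz, mul_one, add_comm]
  by_cases h0 : y * (1 + .single z 1) = 0
  · refine ⟨_, hc', hy ▸ QuaternionGroup.mem_center_of_coeff_mul_a_two hmem' fun g ↦ ?_, hy ▸ hne⟩
    have := hnorm y g
    rw [h0] at this
    exact (CharTwo.add_eq_zero.mp this.symm).symm
  · have hu : 1 + .single z 1 ∈ Set.center (MonoidAlgebra R (QuaternionGroup 2)) := by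
      rw [← one_mul (1 + _)]
      refine hcentral 1 fun g ↦ ?_
      classical
      rw [MonoidAlgebra.one_def, MonoidAlgebra.coeff_single, Finsupp.single_apply]
      split_ifs
      exacts [Set.one_mem_center, Set.zero_mem_center]
    exact ⟨_, Set.mul_mem_center hc' hu, by rw [← mul_assoc, hy]; exact hcentral y hmem',
      by rwa [← mul_assoc, hy]⟩
end

section
/- Let R be a nonzero unital ring in which the element 2 is invertible. Then the group ring RQ₈ of the quaternion group Q₈ of order 8 over R is not a centrally essential ring. -/
/-- In a ring where `2` is a unit, an element `a` that anticommutes with a unit `u` has no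
nonzero central multiple by a central element. -/
theorem mul_eq_zero_of_anticommute {S : Type*} [Ring S] (h2 : IsUnit (2 : S)) {a u c : S}
    (hu : IsUnit u) (hau : u * a = -(a * u)) (hc : c ∈ Set.center S)
    (hac : a * c ∈ Set.center S) : a * c = 0 := by
  have hcu : c * u = u * c := (Set.mem_center_iff.mp hc).comm u
  have hacu : a * c * u = u * (a * c) := (Set.mem_center_iff.mp hac).comm u
  have hneg : a * c * u = -(a * c * u) := by
    calc a * c * u = u * a * c := by rw [hacu, mul_assoc]
      _ = -(a * c * u) := by rw [hau, neg_mul, mul_assoc, mul_assoc, hcu]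
  have hdouble : 2 * (a * c * u) = 0 := by
    rw [two_mul]
    exact eq_neg_iff_add_eq_zero.mp hneg
  exact hu.mul_left_eq_zero.mp (h2.mul_right_eq_zero.mp hdouble)

/-- Let `R` be a nonzero unital ring in which `2` is invertible. Then the group ring `RQ₈`
of the quaternion group of order `8` over `R` is not a centrally essential ring. -/
theorem stmt15 (R : Type*) [Ring R] [Nontrivial R] (h2 : IsUnit (2 : R)) :
    ¬ IsCentrallyEssential (MonoidAlgebra R (QuaternionGroup 2)) := by
  intro h
  let ι := MonoidAlgebra.of R (QuaternionGroup 2)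
  have hne : ι (.a 1) - ι (.a 3) ≠ 0 := by
    rw [sub_ne_zero]
    exact MonoidAlgebra.of_injective.ne (by decide)
  obtain ⟨c, hc, hac, hac_ne⟩ := h _ hne
  have h2' : IsUnit (2 : MonoidAlgebra R (QuaternionGroup 2)) := by
    rw [← map_ofNat (MonoidAlgebra.singleOneRingHom (R := R) (M := QuaternionGroup 2)) 2]
    exact h2.map _
  have hu : IsUnit (ι (.xa 0)) := (Group.isUnit _).map ι
  refine hac_ne (mul_eq_zero_of_anticommute h2' hu ?_ hc hac)
  have hx1 : (.xa 0 * .a 1 : QuaternionGroup 2) = .a 3 * .xa 0 := by decide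
  have hx3 : (.xa 0 * .a 3 : QuaternionGroup 2) = .a 1 * .xa 0 := by decide
  rw [mul_sub, sub_mul, neg_sub, ← map_mul, ← map_mul, ← map_mul, ← map_mul, hx1, hx3]
end

section
/- The group ring ℤ₉Q₈ of the quaternion group Q₈ of order 8 over the ring ℤ/9ℤ is not a centrally essential ring. -/
/-- A ring in which `2` is a unit is not centrally essential if some nonzero element
anticommutes with a unit. -/
theorem not_isCentrallyEssential_of_anticommute {R : Type*} [Ring R] (two : IsUnit (2 : R))
    {x v : R} (hx : IsUnit x) (hv : v ≠ 0) (hxv : x * v = -(v * x)) :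
    ¬ IsCentrallyEssential R := by
  intro h
  obtain ⟨c, hc, hvc, hne⟩ := h v hv
  have comm_x : c * x = x * c := (Set.mem_center_iff.1 hc).comm x
  have comm_vc : v * c * x = x * (v * c) := (Set.mem_center_iff.1 hvc).comm x
  have neg_eq : x * (v * c) = -(x * (v * c)) := by
    calc x * (v * c) = -(v * (x * c)) := by rw [← mul_assoc, hxv, neg_mul, mul_assoc]
      _ = -(x * (v * c)) := by rw [← comm_x, ← mul_assoc, comm_vc]
  have two_mul_eq : 2 * (x * (v * c)) = 0 := by
    rw [two_mul]
    exact eq_neg_iff_add_eq_zero.1 neg_eq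
  exact hne (hx.mul_right_eq_zero.1 (two.mul_right_eq_zero.1 two_mul_eq))

/-- The group ring `ℤ₉Q₈` of the quaternion group of order `8` over `ℤ/9ℤ` is not a
centrally essential ring. -/
theorem stmt16 :
    ¬ IsCentrallyEssential (MonoidAlgebra (ZMod 9) (QuaternionGroup 2)) := by
  have : Nontrivial (ZMod 9) := ⟨0, 1, by decide⟩
  have two : IsUnit (2 : MonoidAlgebra (ZMod 9) (QuaternionGroup 2)) := by
    have h : IsUnit (2 : ZMod 9) := IsUnit.of_mul_eq_one 5 (by decide)
    have := h.map (algebraMap (ZMod 9) (MonoidAlgebra (ZMod 9) (QuaternionGroup 2)))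
    rwa [map_ofNat] at this
  refine not_isCentrallyEssential_of_anticommute two
    (x := MonoidAlgebra.of (ZMod 9) _ (QuaternionGroup.xa 0))
    (v := MonoidAlgebra.of (ZMod 9) _ (QuaternionGroup.a 1) -
      MonoidAlgebra.of (ZMod 9) _ (QuaternionGroup.a 3))
    ((Group.isUnit _).map _) ?_ ?_
  · exact sub_ne_zero.2 (MonoidAlgebra.of_injective.ne (by decide))
  · rw [mul_sub, sub_mul, neg_sub, ← map_mul, ← map_mul, ← map_mul, ← map_mul]
    rfl
end

section
/- A unital ring A is commutative if and only if A is centrally rational, i.e., for every a ∈ A and every nonzero d ∈ A there exists a central element c ∈ C(A) such that a*c ∈ C(A) and d*c ≠ 0. -/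
/-- A unital ring `A` is commutative if and only if `A` is centrally rational, i.e., for
every `a ∈ A` and every nonzero `d ∈ A` there exists a central element `c` such that
`a * c` is central and `d * c ≠ 0`. -/
theorem stmt17 (A : Type*) [Ring A] :
    (∀ x y : A, x * y = y * x) ↔
      (∀ a : A, ∀ d : A, d ≠ 0 →
        ∃ c ∈ Set.center A, a * c ∈ Set.center A ∧ d * c ≠ 0) := by
  constructor
  · intro h a d hd
    refine ⟨1, Set.one_mem_center, ?_, by simpa using hd⟩
    exact Semigroup.mem_center_iff.mpr fun g => h g _
  · intro h x y
    by_contra hxy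
    obtain ⟨c, hc, hxc, hne⟩ := h x (x * y - y * x) (sub_ne_zero.mpr hxy)
    rw [Semigroup.mem_center_iff] at hc hxc
    refine hne ?_
    rw [sub_mul, mul_assoc x y c, hc y, ← mul_assoc x c y, ← hxc y, mul_assoc y x c, sub_self]
end

section
/- The group algebra 𝔽₂Q₈ of the quaternion group Q₈ of order 8 over the field 𝔽₂ = ℤ/2ℤ is a non-commutative centrally essential ring. -/
namespace MonoidAlgebra

variable {R G : Type*} [CommRing R] [Group G] {z : G}

/-- If all commutators of `G` lie in `{1, z}`, then an element of the group algebra whose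
coefficients are invariant under translation by `z` is central. -/
theorem mem_center_of_coeff_mul_right (hcomm : ∀ g h : G, g * h = h * g ∨ g * h = h * g * z)
    {x : MonoidAlgebra R G} (hx : ∀ g, x.coeff (g * z) = x.coeff g) :
    x ∈ Set.center (MonoidAlgebra R G) := by
  refine Semigroup.mem_center_iff.mpr fun y ↦ ?_
  induction y using induction_linear with
  | zero => simp
  | add y₁ y₂ h₁ h₂ => rw [add_mul, mul_add, h₁, h₂]
  | single h r =>
    ext g
    rw [coeff_single_mul_apply, coeff_mul_single_apply, mul_comm]
    rcases hcomm h⁻¹ g with e | e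
    · rw [e]
    · rw [e, hx]

/-- In characteristic two, the group algebra of a group whose commutators lie in `{1, z}`
with `z * z = 1` is centrally essential. -/
theorem isCentrallyEssential_of_commutator [CharP R 2] (hz : z * z = 1)
    (hcomm : ∀ g h : G, g * h = h * g ∨ g * h = h * g * z) :
    IsCentrallyEssential (MonoidAlgebra R G) := by
  have hinv : z⁻¹ = z := inv_eq_of_mul_eq_one_left hz
  have hcoeff (x : MonoidAlgebra R G) (g : G) :
      (x * (1 + single z 1)).coeff g = x.coeff g + x.coeff (g * z) := by
    simp [mul_add, hinv]
  have hcenter (x : MonoidAlgebra R G) :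
      x * (1 + single z 1) ∈ Set.center (MonoidAlgebra R G) :=
    mem_center_of_coeff_mul_right hcomm fun g ↦ by
      rw [hcoeff, hcoeff, mul_assoc, hz, mul_one, add_comm]
  intro x hx
  by_cases h : x * (1 + single z 1) = 0
  · refine ⟨1, Set.one_mem_center, ?_, by rwa [mul_one]⟩
    rw [mul_one]
    refine mem_center_of_coeff_mul_right hcomm fun g ↦ ?_
    have hg := hcoeff x g
    rw [h, coeff_zero, Finsupp.zero_apply] at hg
    exact (CharTwo.add_eq_zero.mp hg.symm).symm
  · exact ⟨1 + single z 1, by simpa using hcenter 1, hcenter x, h⟩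

end MonoidAlgebra

/-- The group algebra `𝔽₂Q₈` of the quaternion group of order `8` over the field `ℤ/2ℤ` is a
non-commutative centrally essential ring. -/
theorem stmt19 :
    IsCentrallyEssential (MonoidAlgebra (ZMod 2) (QuaternionGroup 2)) ∧
      ∃ x y : MonoidAlgebra (ZMod 2) (QuaternionGroup 2), x * y ≠ y * x := by
  refine ⟨MonoidAlgebra.isCentrallyEssential_of_commutator (z := .a 2) (by decide) (by decide),
    .of _ _ (.a 1), .of _ _ (.xa 0), fun h ↦ ?_⟩
  rw [← map_mul, ← map_mul] at h
  exact absurd (MonoidAlgebra.of_injective h) (by decide)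
end
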